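/- arXiv:2002.09403 — 6 statements merged into one kernel-verified Lean document; each statement's English description precedes it below -/
import Mathlib

section
/- (Theorem 3.2, convergence of Monotone Inexact Tensor Method I.) Let p ≥ 1 be an integer, L_p > 0, c ≥ 0, and let F : E → ℝ ∪ {+∞} be convex with minimizer x* and minimal value F*. Assume D := sup{‖x − x*‖ : F(x) ≤ F(x_0)} < +∞. Let (x_k)_{k≥0} be a sequence with x_0 ∈ dom F such that for every k ≥ 0: F(x_{k+1}) ≤ F(x_k), and for every y ∈ dom F, F(x_{k+1}) ≤ F(y) + (L_p/p!)‖y − x_k‖^{p+1} + δ_{k+1}, where δ_k = c/k^{p+1}. Then for every k ≥ 1: F(x_k) − F* ≤ (p+1)^{p+1} L_p D^{p+1}/(p!·k^p) + c/k^p. -/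
/-- One step of the method, tested at the point `x + t • (xstar - x)` of the segment from the
current iterate to the minimizer. -/
lemma ConvexOn.sub_le_of_step_along_segment {E : Type*} [NormedAddCommGroup E] [NormedSpace ℝ E]
    {s : Set E} {F : E → ℝ} (hF : ConvexOn ℝ s F) {x x' xstar : E} (hx : x ∈ s)
    (hxstar : xstar ∈ s) {M D ε t : ℝ} {n : ℕ} (hM : 0 ≤ M) (hD : ‖x - xstar‖ ≤ D)
    (hstep : ∀ y ∈ s, F x' ≤ F y + M * ‖y - x‖ ^ n + ε) (ht0 : 0 ≤ t) (ht1 : t ≤ 1) :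
    F x' - F xstar ≤ (1 - t) * (F x - F xstar) + M * (t * D) ^ n + ε := by
  have hy := hF.1 hx hxstar (sub_nonneg.2 ht1) ht0 (by ring)
  have hFy := hF.2 hx hxstar (sub_nonneg.2 ht1) ht0 (by ring)
  have hnorm : ‖(1 - t) • x + t • xstar - x‖ ≤ t * D := by
    have : (1 - t) • x + t • xstar - x = t • (xstar - x) := by module
    rw [this, norm_smul, Real.norm_of_nonneg ht0, norm_sub_rev]
    gcongr
  have hpow : M * ‖(1 - t) • x + t • xstar - x‖ ^ n ≤ M * (t * D) ^ n := by gcongr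
  have := hstep _ hy
  simp only [smul_eq_mul] at hFy
  linarith

/-- Bernoulli's inequality for `(k / (k + 1)) ^ n`. -/
lemma one_sub_div_succ_pow_le (k n : ℕ) :
    1 - ((k : ℝ) / (k + 1)) ^ n ≤ n / (k + 1) := by
  have hk : (0 : ℝ) < k + 1 := by positivity
  have hle : (1 : ℝ) / (k + 1) ≤ 1 := by
    rw [div_le_one hk]
    linarith [(Nat.cast_nonneg k : (0 : ℝ) ≤ k)]
  have h := one_add_mul_le_pow (a := -(1 / ((k : ℝ) + 1))) (by linarith) n
  have heq : 1 + -(1 / ((k : ℝ) + 1)) = k / (k + 1) := by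
    field_simp
    ring
  rw [heq] at h
  have : (n : ℝ) / (k + 1) = n * (1 / (k + 1)) := by ring
  linarith

/-- Theorem 3.2: convergence of the Monotone Inexact Tensor Method I with inner
accuracies `δ_k = c / k^{p+1}`.  The extended-valued convex objective `F` is modeled by a
real-valued function on its domain `domF`.  `D` is (an upper bound on) the radius of the
initial level set `{x : F(x) ≤ F(x_0)}` around the minimizer `x*`. -/
theorem monotone_inexact_tensor_method_I_convergence
    {E : Type*} [NormedAddCommGroup E] [InnerProductSpace ℝ E] [FiniteDimensional ℝ E]
    (p : ℕ) (hp : 1 ≤ p) (L c : ℝ) (hL : 0 < L) (hc : 0 ≤ c)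
    (domF : Set E) (F : E → ℝ) (hconv : ConvexOn ℝ domF F)
    (xstar : E) (hxstar : xstar ∈ domF) (hmin : ∀ z ∈ domF, F xstar ≤ F z)
    (x : ℕ → E) (hxdom : ∀ k, x k ∈ domF)
    (D : ℝ) (hD : ∀ z ∈ domF, F z ≤ F (x 0) → ‖z - xstar‖ ≤ D)
    (δ : ℕ → ℝ) (hδ : ∀ k : ℕ, 1 ≤ k → δ k = c / (k : ℝ) ^ (p + 1))
    (hmono : ∀ k : ℕ, F (x (k + 1)) ≤ F (x k))
    (hstep : ∀ k : ℕ, ∀ y ∈ domF,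
      F (x (k + 1)) ≤ F y + L / (Nat.factorial p : ℝ) * ‖y - x k‖ ^ (p + 1) + δ (k + 1)) :
    ∀ k : ℕ, 1 ≤ k →
      F (x k) - F xstar ≤
        ((p : ℝ) + 1) ^ (p + 1) * L * D ^ (p + 1) / ((Nat.factorial p : ℝ) * (k : ℝ) ^ p)
          + c / (k : ℝ) ^ p := by
  have hD0 : 0 ≤ D := (norm_nonneg _).trans (hD _ (hxdom 0) le_rfl)
  have hanti : Antitone fun k => F (x k) := antitone_nat_of_succ_le hmono
  have hM : 0 ≤ L / (Nat.factorial p : ℝ) := by positivity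
  have key : ∀ k : ℕ, (k : ℝ) ^ (p + 1) * (F (x k) - F xstar) ≤
      k * (L / (Nat.factorial p : ℝ) * (((p : ℝ) + 1) * D) ^ (p + 1) + c) := by
    intro k
    induction k with
    | zero => simp
    | succ k ih =>
      have hk : (0 : ℝ) < k + 1 := by positivity
      set t : ℝ := 1 - ((k : ℝ) / (k + 1)) ^ (p + 1) with ht
      have ht1 : t ≤ 1 := sub_le_self _ (by positivity)
      have ht0 : 0 ≤ t := sub_nonneg.2 <| pow_le_one₀ (by positivity) <| by
        rw [div_le_one hk]
        linarith
      have htle : ((k : ℝ) + 1) * t ≤ p + 1 := by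
        have := one_sub_div_succ_pow_le k (p + 1)
        rw [le_div_iff₀ hk] at this
        push_cast at this
        linarith
      have hrec := hconv.sub_le_of_step_along_segment (hxdom k) hxstar hM
        (hD _ (hxdom k) (hanti k.zero_le)) (hstep k) ht0 ht1
      rw [hδ (k + 1) k.succ_pos] at hrec
      push_cast at hrec ⊢
      have hweight : ((k : ℝ) + 1) ^ (p + 1) * (1 - t) = (k : ℝ) ^ (p + 1) := by
        rw [ht, sub_sub_cancel, ← mul_pow, mul_div_cancel₀ _ hk.ne']
      have hpow : (((k : ℝ) + 1) * t * D) ^ (p + 1) ≤ (((p : ℝ) + 1) * D) ^ (p + 1) := by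
        gcongr
      calc ((k : ℝ) + 1) ^ (p + 1) * (F (x (k + 1)) - F xstar)
          ≤ ((k : ℝ) + 1) ^ (p + 1) * ((1 - t) * (F (x k) - F xstar)
            + L / (Nat.factorial p : ℝ) * (t * D) ^ (p + 1) + c / ((k : ℝ) + 1) ^ (p + 1)) := by
            gcongr
        _ = ((k : ℝ) + 1) ^ (p + 1) * (1 - t) * (F (x k) - F xstar)
            + L / (Nat.factorial p : ℝ) * (((k : ℝ) + 1) * t * D) ^ (p + 1)
            + ((k : ℝ) + 1) ^ (p + 1) * (c / ((k : ℝ) + 1) ^ (p + 1)) := by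
            simp only [mul_pow]
            ring
        _ ≤ k * (L / (Nat.factorial p : ℝ) * (((p : ℝ) + 1) * D) ^ (p + 1) + c)
            + L / (Nat.factorial p : ℝ) * (((p : ℝ) + 1) * D) ^ (p + 1) + c := by
            rw [hweight, mul_div_cancel₀ _ (pow_pos hk _).ne']
            gcongr
        _ = _ := by ring
  intro k hk
  have hk0 : (0 : ℝ) < k := by exact_mod_cast hk
  have hbound : (k : ℝ) ^ p * (F (x k) - F xstar) ≤
      L / (Nat.factorial p : ℝ) * (((p : ℝ) + 1) * D) ^ (p + 1) + c := by
    refine le_of_mul_le_mul_left ?_ hk0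
    rw [← mul_assoc, ← pow_succ']
    exact key k
  rw [← le_div_iff₀' (by positivity)] at hbound
  refine hbound.trans_eq ?_
  rw [mul_pow]
  field_simp
end

section
/- (Theorem 3.3, convergence of Monotone Inexact Tensor Method II with adaptive accuracies.) Let p ≥ 1 be an integer, L_p > 0, and let F : E → ℝ ∪ {+∞} be convex with minimizer x* and minimal value F*. Assume D := sup{‖x − x*‖ : F(x) ≤ F(x_0)} < +∞. Fix δ_1 ≥ 0 and 0 ≤ c < 1/((p+2)·3^{p+1} − 1), and set δ_k = c·(F(x_{k−2}) − F(x_{k−1})) for k ≥ 2. Let (x_k)_{k≥0} satisfy for every k ≥ 0: F(x_{k+1}) ≤ F(x_k), and for every y ∈ dom F, F(x_{k+1}) ≤ F(y) + (L_p/p!)‖y − x_k‖^{p+1} + δ_{k+1}. Then for every k ≥ 1: F(x_k) − F* ≤ γ L_p D^{p+1}/(p!·k^p) + β/k^{p+2}, where γ = (p+2)^{p+1}/(1 − c((p+2)3^{p+1} − 1)) and β = (δ_1 + c·2^{p+2}(F(x_0) − F*))/(1 − c((p+2)²/(p+1) − 1)). -/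
lemma pow_succ_sub_one_le_mul_pow {q : ℝ} (hq : 1 ≤ q) (m : ℕ) :
    q ^ (m + 1) - 1 ≤ ((m : ℝ) + 1) * (q - 1) * q ^ m := by
  induction m with
  | zero => simp
  | succ m ih =>
    have h1 : 1 ≤ q ^ (m + 1) := one_le_pow₀ hq
    have h2 := mul_le_mul_of_nonneg_left ih (zero_le_one.trans hq)
    have h3 := mul_le_mul_of_nonneg_left h1 (sub_nonneg.2 hq)
    push_cast
    simp only [pow_succ] at *
    linarith

lemma one_add_pow_mul_one_sub_le_one {t u : ℝ} (n : ℕ) (ht : 0 ≤ t) (hu : u ≤ 1)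
    (h : n * t ≤ u) : (1 + t) ^ n * (1 - u) ≤ 1 := by
  have h1 : (1 + t) ^ n ≤ Real.exp (n * t) := by
    rw [Real.exp_nat_mul]
    exact pow_le_pow_left₀ (by linarith) (by linarith [Real.add_one_le_exp t]) n
  have h2 : 1 - u ≤ Real.exp (-u) := by linarith [Real.add_one_le_exp (-u)]
  calc (1 + t) ^ n * (1 - u) ≤ Real.exp (n * t) * Real.exp (-u) :=
        mul_le_mul h1 h2 (by linarith) (Real.exp_pos _).le
    _ = Real.exp (n * t - u) := by rw [← Real.exp_add, sub_eq_add_neg]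
    _ ≤ 1 := Real.exp_le_one_iff.2 (by linarith)

/-- A step size propagating the bounds `γ / K ^ p` and `1 / K ^ (p + 2)` through the two-term
recurrence `f (K + 1) ≤ (1 - a - c) * f K + c * f (K - 1) + a ^ (p + 1)`. -/
lemma exists_step_size (p : ℕ) {c K : ℝ} (hK : 3 ≤ K) (hc0 : 0 ≤ c)
    (hc1 : c * (((p : ℝ) + 2) * 3 ^ (p + 1) - 1) < 1) :
    ∃ a : ℝ, 0 ≤ a ∧ a + c ≤ 1 ∧
      (1 - a - c) / K ^ (p + 2) + c / (K - 1) ^ (p + 2) = 1 / (K + 1) ^ (p + 2) ∧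
      (1 - a - c) * ((((p : ℝ) + 2) ^ (p + 1) / (1 - c * (((p : ℝ) + 2) * 3 ^ (p + 1) - 1)))
          / K ^ p)
        + c * ((((p : ℝ) + 2) ^ (p + 1) / (1 - c * (((p : ℝ) + 2) * 3 ^ (p + 1) - 1)))
          / (K - 1) ^ p) + a ^ (p + 1)
        ≤ (((p : ℝ) + 2) ^ (p + 1) / (1 - c * (((p : ℝ) + 2) * 3 ^ (p + 1) - 1)))
          / (K + 1) ^ p := by
  have hp0 : (0 : ℝ) ≤ p := p.cast_nonneg
  have hK0 : 0 < K := by linarith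
  have hK1 : 0 < K - 1 := by linarith
  have hK2 : 0 < K + 1 := by linarith
  set u : ℝ := c * (((p : ℝ) + 2) * 3 ^ (p + 1) - 1) with hu
  have hu1 : 0 < 1 - u := by linarith
  have h3 : (1 : ℝ) ≤ 3 ^ (p + 1) := one_le_pow₀ (by norm_num)
  have hc2 : c * 2 ^ (p + 2) ≤ 1 := by
    have h12 : (1 : ℝ) ≤ 2 ^ p := one_le_pow₀ (by norm_num)
    have h4 : (2 : ℝ) ^ (p + 2) ≤ ((p : ℝ) + 2) * 3 ^ (p + 1) - 1 := by
      have h32 : (2 : ℝ) ^ p ≤ 3 ^ p := pow_le_pow_left₀ (by norm_num) (by norm_num) _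
      rw [pow_add, pow_succ 3]
      nlinarith [mul_nonneg hp0 (pow_pos (by norm_num : (0 : ℝ) < 3) p).le]
    exact (mul_le_mul_of_nonneg_left h4 hc0).trans hc1.le
  set r : ℝ := K / (K + 1) with hr
  set q : ℝ := K / (K - 1) with hq
  have hq1 : 1 ≤ q := (one_le_div hK1).2 (by linarith)
  have hq2 : q ≤ 3 / 2 := (div_le_iff₀ hK1).2 (by linarith)
  have hr0 : 0 ≤ r := by positivity
  have hr1 : r ≤ 1 := (div_le_one hK2).2 (by linarith)
  have hqr : q ≤ 2 * r := by
    rw [hq, hr, ← mul_div_assoc, div_le_div_iff₀ hK1 hK2]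
    nlinarith
  have ha0 : 0 ≤ 1 - r ^ (p + 2) + c * (q ^ (p + 2) - 1) :=
    add_nonneg (sub_nonneg.2 (pow_le_one₀ hr0 hr1))
      (mul_nonneg hc0 (sub_nonneg.2 (one_le_pow₀ hq1)))
  set a : ℝ := 1 - r ^ (p + 2) + c * (q ^ (p + 2) - 1) with ha
  have hac : a + c ≤ 1 := by
    have h1 : q ^ (p + 2) ≤ (2 * r) ^ (p + 2) := pow_le_pow_left₀ (by linarith) hqr _
    rw [mul_pow] at h1
    have h2 := mul_le_mul_of_nonneg_left h1 hc0
    have h3 := mul_le_mul_of_nonneg_right hc2 (pow_nonneg hr0 (p + 2))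
    rw [ha]
    linarith
  have heq : (1 - a - c) / K ^ (p + 2) + c / (K - 1) ^ (p + 2) = 1 / (K + 1) ^ (p + 2) := by
    have h1 : r ^ (p + 2) = K ^ (p + 2) / (K + 1) ^ (p + 2) := div_pow _ _ _
    have h2 : q ^ (p + 2) = K ^ (p + 2) / (K - 1) ^ (p + 2) := div_pow _ _ _
    have h3 : 1 - a - c = K ^ (p + 2) / (K + 1) ^ (p + 2)
        - c * (K ^ (p + 2) / (K - 1) ^ (p + 2)) := by
      rw [ha, h1, h2]; ring
    have h4 : 0 < K ^ (p + 2) := by positivity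
    have h5 : 0 < (K - 1) ^ (p + 2) := by positivity
    have h6 : 0 < (K + 1) ^ (p + 2) := by positivity
    rw [h3]
    generalize K ^ (p + 2) = X at *
    generalize (K - 1) ^ (p + 2) = Y at *
    generalize (K + 1) ^ (p + 2) = Z at *
    field_simp
    ring
  have hapow : a ^ (p + 1) ≤ ((p : ℝ) + 2) ^ (p + 1) / (1 - u) / (K + 1) ^ (p + 1) := by
    set t : ℝ := 2 * c * (3 / 2) ^ (p + 1) with ht
    have ht0 : 0 ≤ t := by positivity
    have htu : ((p + 1 : ℕ) : ℝ) * t ≤ u := by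
      have h32 : 2 * (3 / 2 : ℝ) ^ (p + 1) ≤ 3 ^ (p + 1) := by
        have h2 : (1 : ℝ) ≤ 2 ^ p := one_le_pow₀ (by norm_num)
        rw [div_pow, mul_div_assoc', div_le_iff₀ (by positivity), pow_succ 2]
        nlinarith
      have h4 : ((p : ℝ) + 1) * (2 * (3 / 2 : ℝ) ^ (p + 1))
          ≤ ((p : ℝ) + 2) * 3 ^ (p + 1) - 1 := by nlinarith
      have h5 := mul_le_mul_of_nonneg_left h4 hc0
      rw [hu, ht]
      push_cast
      linarith
    have hw : 1 - r ^ (p + 2) ≤ ((p : ℝ) + 2) / (K + 1) := by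
      have h1 := one_add_mul_le_pow (a := r - 1) (by linarith) (p + 2)
      have h2 : r - 1 = -(1 / (K + 1)) := by rw [hr]; field_simp; ring
      have h3 : 1 + (r - 1) = r := by ring
      rw [h3, h2] at h1
      push_cast at h1
      have h4 : ((p : ℝ) + 2) / (K + 1) = (p + 2) * (1 / (K + 1)) := by ring
      linarith
    have hw2 : q ^ (p + 2) - 1 ≤ ((p : ℝ) + 2) / (K + 1) * (2 * (3 / 2) ^ (p + 1)) := by
      have h1 := pow_succ_sub_one_le_mul_pow hq1 (p + 1)
      have h2 : q - 1 ≤ 2 / (K + 1) := by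
        have : q - 1 = 1 / (K - 1) := by rw [hq]; field_simp; ring
        rw [this, div_le_div_iff₀ hK1 hK2]
        linarith
      have h3 : q ^ (p + 1) ≤ (3 / 2) ^ (p + 1) := pow_le_pow_left₀ (by linarith) hq2 _
      have h4 := mul_le_mul h2 h3 (by positivity) (by positivity)
      have h5 := mul_le_mul_of_nonneg_left h4 (by positivity : 0 ≤ (p : ℝ) + 2)
      push_cast at h1
      calc q ^ (p + 2) - 1 ≤ ((p : ℝ) + 2) * ((q - 1) * q ^ (p + 1)) := by
            have : p + 1 + 1 = p + 2 := rfl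
            rw [this] at h1
            linarith
        _ ≤ _ := h5
        _ = _ := by ring
    have hab : a ≤ ((p : ℝ) + 2) / (K + 1) * (1 + t) := by
      have h1 := mul_le_mul_of_nonneg_left hw2 hc0
      rw [ha, ht]
      linarith
    have h1 := one_add_pow_mul_one_sub_le_one (p + 1) ht0 (by linarith) htu
    calc a ^ (p + 1) ≤ (((p : ℝ) + 2) / (K + 1) * (1 + t)) ^ (p + 1) :=
          pow_le_pow_left₀ ha0 hab _
      _ = (((p : ℝ) + 2) ^ (p + 1) / (K + 1) ^ (p + 1)) * (1 + t) ^ (p + 1) := by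
          rw [mul_pow, div_pow]
      _ ≤ (((p : ℝ) + 2) ^ (p + 1) / (K + 1) ^ (p + 1)) * (1 / (1 - u)) :=
          mul_le_mul_of_nonneg_left ((le_div_iff₀ hu1).2 h1) (by positivity)
      _ = _ := by field_simp
  refine ⟨a, ha0, hac, heq, ?_⟩
  have hγ : 0 ≤ ((p : ℝ) + 2) ^ (p + 1) / (1 - u) := by positivity
  generalize ((p : ℝ) + 2) ^ (p + 1) / (1 - u) = γ at *
  have hsum : (1 - a - c) / K ^ p + c / (K - 1) ^ p + 1 / (K + 1) ^ (p + 1)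
      ≤ 1 / (K + 1) ^ p := by
    have h1 : (1 - a - c) / K ^ p = K ^ 2 * ((1 - a - c) / K ^ (p + 2)) := by
      rw [pow_add]; field_simp
    have h2 : c / (K - 1) ^ p ≤ K ^ 2 * (c / (K - 1) ^ (p + 2)) := by
      have : c / (K - 1) ^ p = (K - 1) ^ 2 * (c / (K - 1) ^ (p + 2)) := by
        rw [pow_add]; field_simp
      rw [this]
      exact mul_le_mul_of_nonneg_right (by nlinarith) (by positivity)
    have h3 : 1 / (K + 1) ^ p = (K + 1) ^ 2 * (1 / (K + 1) ^ (p + 2)) := by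
      rw [pow_add]; field_simp
    have h4 : 1 / (K + 1) ^ (p + 1) = (K + 1) * (1 / (K + 1) ^ (p + 2)) := by
      rw [pow_add, pow_add]; field_simp
    have h5 : 0 ≤ 1 / (K + 1) ^ (p + 2) := by positivity
    rw [h3, h1, h4]
    have h6 := congrArg (K ^ 2 * ·) heq
    simp only [mul_add] at h6
    nlinarith
  have := mul_le_mul_of_nonneg_left hsum hγ
  calc _ ≤ (1 - a - c) * (γ / K ^ p) + c * (γ / (K - 1) ^ p) + γ / (K + 1) ^ (p + 1) := by
        linarith
    _ = γ * ((1 - a - c) / K ^ p + c / (K - 1) ^ p + 1 / (K + 1) ^ (p + 1)) := by ring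
    _ ≤ _ := this
    _ = _ := by ring

/-- Rate of decay of a nonnegative sequence satisfying the recurrence of the inexact tensor
method with adaptive accuracies. -/
lemma decay_of_adaptive_recurrence {p : ℕ} (hp : 1 ≤ p) {c A d : ℝ} (hA : 0 ≤ A) (hd : 0 ≤ d)
    (hc0 : 0 ≤ c) (hc1 : c < 1 / (((p : ℝ) + 2) * 3 ^ (p + 1) - 1)) {f : ℕ → ℝ}
    (hf : ∀ k, 0 ≤ f k) (hf1 : f 1 ≤ A + d)
    (hstep : ∀ k a, 0 ≤ a → a ≤ 1 →
      f (k + 2) ≤ (1 - a) * f (k + 1) + A * a ^ (p + 1) + c * (f k - f (k + 1)))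
    {k : ℕ} (hk : 1 ≤ k) :
    f k ≤ A * ((((p : ℝ) + 2) ^ (p + 1) / (1 - c * (((p : ℝ) + 2) * 3 ^ (p + 1) - 1)))
        / (k : ℝ) ^ p)
      + ((d + c * 2 ^ (p + 2) * f 0) / (1 - c * (((p : ℝ) + 2) ^ 2 / ((p : ℝ) + 1) - 1)))
        / (k : ℝ) ^ (p + 2) := by
  have hp1 : (1 : ℝ) ≤ p := by exact_mod_cast hp
  have h9 : (9 : ℝ) ≤ 3 ^ (p + 1) := by
    calc (9 : ℝ) = 3 ^ 2 := by norm_num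
      _ ≤ 3 ^ (p + 1) := pow_le_pow_right₀ (by norm_num) (by omega)
  have hM : 0 < ((p : ℝ) + 2) * 3 ^ (p + 1) - 1 := by nlinarith
  have hcM : c * (((p : ℝ) + 2) * 3 ^ (p + 1) - 1) < 1 := (lt_div_iff₀ hM).1 hc1
  have hstepsize := fun K hK => exists_step_size p (K := K) hK hc0 hcM
  have hv0 : 0 ≤ ((p : ℝ) + 2) ^ 2 / ((p : ℝ) + 1) - 1 := by
    rw [sub_nonneg, one_le_div (by positivity)]; nlinarith
  have hv1 : ((p : ℝ) + 2) ^ 2 / ((p : ℝ) + 1) ≤ ((p : ℝ) + 2) * 3 ^ (p + 1) := by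
    rw [div_le_iff₀ (by positivity)]
    have : (p : ℝ) + 2 ≤ 3 ^ (p + 1) * (p + 1) := by nlinarith
    nlinarith
  have hcv : c * (((p : ℝ) + 2) ^ 2 / ((p : ℝ) + 1) - 1) < 1 :=
    (mul_le_mul_of_nonneg_left (by linarith) hc0).trans_lt hcM
  have hcv0 : 0 ≤ c * (((p : ℝ) + 2) ^ 2 / ((p : ℝ) + 1) - 1) := mul_nonneg hc0 hv0
  have hd3 : c * d * 3 ^ (p + 2) * (1 - c * (((p : ℝ) + 2) ^ 2 / ((p : ℝ) + 1) - 1)) ≤ d := by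
    have key : c * 3 ^ (p + 2) * (1 - c * (((p : ℝ) + 2) ^ 2 / ((p : ℝ) + 1) - 1)) ≤ 1 := by
      rcases hp.eq_or_lt with rfl | hp2
      · norm_num at hcM ⊢
        nlinarith
      · have hp2 : (2 : ℝ) ≤ p := by exact_mod_cast hp2
        have h1 : c * 3 ^ (p + 2) ≤ 1 := by
          refine (mul_le_mul_of_nonneg_left ?_ hc0).trans hcM.le
          rw [pow_succ]
          nlinarith
        exact mul_le_one₀ h1 (by linarith) (by linarith)
    nlinarith
  have hγ : 3 * 3 ^ p ≤ ((p : ℝ) + 2) ^ (p + 1)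
      / (1 - c * (((p : ℝ) + 2) * 3 ^ (p + 1) - 1)) := by
    have h1 : (3 : ℝ) ^ (p + 1) ≤ ((p : ℝ) + 2) ^ (p + 1) :=
      pow_le_pow_left₀ (by norm_num) (by linarith) _
    rw [le_div_iff₀ (by linarith)]
    have h2 : 0 ≤ c * (((p : ℝ) + 2) * 3 ^ (p + 1) - 1) := mul_nonneg hc0 hM.le
    rw [pow_succ 3] at h1
    nlinarith [pow_pos (by norm_num : (0 : ℝ) < 3) p]
  have hcle : c ≤ 1 := by nlinarith
  have hN0 : 0 ≤ c * 2 ^ (p + 2) * f 0 := mul_nonneg (by positivity) (hf 0)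
  have hβ : d + c * 2 ^ (p + 2) * f 0 ≤ (d + c * 2 ^ (p + 2) * f 0)
      / (1 - c * (((p : ℝ) + 2) ^ 2 / ((p : ℝ) + 1) - 1)) :=
    le_div_self (by linarith) (by linarith) (by linarith)
  have hβ3 : c * d * 3 ^ (p + 2) ≤ (d + c * 2 ^ (p + 2) * f 0)
      / (1 - c * (((p : ℝ) + 2) ^ 2 / ((p : ℝ) + 1) - 1)) := by
    rw [le_div_iff₀ (by linarith)]
    linarith
  clear hd3 hcv hcv0 hv0 hv1
  generalize (d + c * 2 ^ (p + 2) * f 0)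
      / (1 - c * (((p : ℝ) + 2) ^ 2 / ((p : ℝ) + 1) - 1)) = β at *
  generalize ((p : ℝ) + 2) ^ (p + 1)
      / (1 - c * (((p : ℝ) + 2) * 3 ^ (p + 1) - 1)) = γ at *
  have h3p : (1 : ℝ) ≤ 3 ^ p := one_le_pow₀ (by norm_num)
  have hbase (n : ℕ) : f (n + 2) ≤ A + c * (f n - f (n + 1)) := by
    simpa using hstep n 1 zero_le_one le_rfl
  have hone : f 1 ≤ A * (γ / ((1 : ℕ) : ℝ) ^ p) + β / ((1 : ℕ) : ℝ) ^ (p + 2) := by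
    simp only [Nat.cast_one, one_pow, div_one]
    nlinarith
  have htwo : f 2 ≤ A * (γ / ((2 : ℕ) : ℝ) ^ p) + β / ((2 : ℕ) : ℝ) ^ (p + 2) := by
    have h1 : 1 ≤ γ / ((2 : ℕ) : ℝ) ^ p := by
      have : (2 : ℝ) ^ p ≤ 3 ^ p := pow_le_pow_left₀ (by norm_num) (by norm_num) _
      rw [one_le_div (by positivity)]
      push_cast
      linarith
    have h2 : c * f 0 ≤ β / ((2 : ℕ) : ℝ) ^ (p + 2) := by
      rw [le_div_iff₀ (by positivity)]
      push_cast
      linarith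
    have h3 := hbase 0
    have h4 := mul_nonneg hc0 (hf 1)
    norm_num at h3
    nlinarith
  have hthree : f 3 ≤ A * (γ / ((3 : ℕ) : ℝ) ^ p) + β / ((3 : ℕ) : ℝ) ^ (p + 2) := by
    have h1 : 3 ≤ γ / ((3 : ℕ) : ℝ) ^ p := by
      rw [le_div_iff₀ (by positivity)]
      push_cast
      linarith
    have h2 : c * d ≤ β / ((3 : ℕ) : ℝ) ^ (p + 2) := by
      rw [le_div_iff₀ (by positivity)]
      push_cast
      linarith
    have h3 := hbase 1
    have h4 := mul_nonneg hc0 (hf 2)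
    have h5 := mul_le_mul_of_nonneg_left hf1 hc0
    have h6 := mul_le_mul_of_nonneg_left h1 hA
    have h7 := mul_le_mul_of_nonneg_right hcle hA
    norm_num at h3
    linarith
  have hpair (n : ℕ) :
      f (n + 2) ≤ A * (γ / ((n + 2 : ℕ) : ℝ) ^ p) + β / ((n + 2 : ℕ) : ℝ) ^ (p + 2) ∧
      f (n + 3) ≤ A * (γ / ((n + 3 : ℕ) : ℝ) ^ p) + β / ((n + 3 : ℕ) : ℝ) ^ (p + 2) := by
    induction n with
    | zero => exact ⟨htwo, hthree⟩
    | succ n ih =>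
      refine ⟨by convert ih.2 using 1, ?_⟩
      obtain ⟨a, ha0, hac, heq, hle⟩ := hstepsize ((n + 3 : ℕ) : ℝ)
        (by push_cast; linarith [n.cast_nonneg (α := ℝ)])
      have e1 : ((n + 3 : ℕ) : ℝ) - 1 = ((n + 2 : ℕ) : ℝ) := by push_cast; ring
      have e2 : ((n + 3 : ℕ) : ℝ) + 1 = ((n + 1 + 3 : ℕ) : ℝ) := by push_cast; ring
      rw [e1, e2] at heq hle
      have h1 := hstep (n + 2) a ha0 (by linarith)
      have h2 := mul_le_mul_of_nonneg_left ih.2 (by linarith : 0 ≤ 1 - a - c)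
      have h3 := mul_le_mul_of_nonneg_left ih.1 hc0
      have h4 := mul_le_mul_of_nonneg_left hle hA
      have h5 := congrArg (β * ·) heq
      simp only [mul_add] at h5
      have h6 : f (n + 1 + 3) = f (n + 2 + 2) := rfl
      have h7 : f (n + 2 + 1) = f (n + 3) := rfl
      rw [h6]
      rw [h7] at h1
      simp only [div_eq_mul_inv] at *
      linarith
  rcases hk.eq_or_lt with rfl | hk2
  · exact hone
  · obtain ⟨n, rfl⟩ := Nat.exists_eq_add_of_le hk2
    have := (hpair n).1
    rwa [add_comm n 2] at this

/-- Theorem 3.3: convergence of the Monotone Inexact Tensor Method II with the adaptive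
inner accuracies `δ_k = c (F(x_{k-2}) - F(x_{k-1}))` for `k ≥ 2`.  The extended-valued
convex objective `F` is modeled by a real-valued function on its domain `domF`.  `D` is (an
upper bound on) the radius of the initial level set around the minimizer `x*`. -/
theorem monotone_inexact_tensor_method_II_convergence
    {E : Type*} [NormedAddCommGroup E] [InnerProductSpace ℝ E] [FiniteDimensional ℝ E]
    (p : ℕ) (hp : 1 ≤ p) (L : ℝ) (hL : 0 < L)
    (domF : Set E) (F : E → ℝ) (hconv : ConvexOn ℝ domF F)
    (xstar : E) (hxstar : xstar ∈ domF) (hmin : ∀ z ∈ domF, F xstar ≤ F z)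
    (x : ℕ → E) (hxdom : ∀ k, x k ∈ domF)
    (D : ℝ) (hD : ∀ z ∈ domF, F z ≤ F (x 0) → ‖z - xstar‖ ≤ D)
    (c : ℝ) (hc0 : 0 ≤ c) (hc1 : c < 1 / (((p : ℝ) + 2) * 3 ^ (p + 1) - 1))
    (δ : ℕ → ℝ) (hδ1 : 0 ≤ δ 1)
    (hδ : ∀ k : ℕ, 2 ≤ k → δ k = c * (F (x (k - 2)) - F (x (k - 1))))
    (hmono : ∀ k : ℕ, F (x (k + 1)) ≤ F (x k))
    (hstep : ∀ k : ℕ, ∀ y ∈ domF,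
      F (x (k + 1)) ≤ F y + L / (Nat.factorial p : ℝ) * ‖y - x k‖ ^ (p + 1) + δ (k + 1)) :
    ∀ k : ℕ, 1 ≤ k →
      F (x k) - F xstar ≤
        (((p : ℝ) + 2) ^ (p + 1) / (1 - c * (((p : ℝ) + 2) * 3 ^ (p + 1) - 1)))
            * L * D ^ (p + 1) / ((Nat.factorial p : ℝ) * (k : ℝ) ^ p)
          + ((δ 1 + c * 2 ^ (p + 2) * (F (x 0) - F xstar))
              / (1 - c * (((p : ℝ) + 2) ^ 2 / ((p : ℝ) + 1) - 1))) / (k : ℝ) ^ (p + 2) := by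
  intro k hk
  have hanti : Antitone fun k => F (x k) := antitone_nat_of_succ_le hmono
  have hdist (k : ℕ) : ‖x k - xstar‖ ≤ D := hD _ (hxdom k) (hanti k.zero_le)
  have hD0 : 0 ≤ D := (norm_nonneg _).trans (hdist 0)
  have hrec (k : ℕ) (a : ℝ) (ha0 : 0 ≤ a) (ha1 : a ≤ 1) :
      F (x (k + 1)) - F xstar ≤ (1 - a) * (F (x k) - F xstar)
        + L / (Nat.factorial p : ℝ) * D ^ (p + 1) * a ^ (p + 1) + δ (k + 1) := by
    have hy := hconv.1 (hxdom k) hxstar (sub_nonneg.2 ha1) ha0 (by ring)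
    have hFy := hconv.2 (hxdom k) hxstar (sub_nonneg.2 ha1) ha0 (by ring)
    have hnorm : ‖(1 - a) • x k + a • xstar - x k‖ ≤ a * D := by
      have : (1 - a) • x k + a • xstar - x k = -(a • (x k - xstar)) := by module
      rw [this, norm_neg, norm_smul, Real.norm_of_nonneg ha0]
      exact mul_le_mul_of_nonneg_left (hdist k) ha0
    have hpow := mul_le_mul_of_nonneg_left (pow_le_pow_left₀ (norm_nonneg _) hnorm (p + 1))
      (by positivity : 0 ≤ L / (Nat.factorial p : ℝ))
    have := hstep k _ hy
    simp only [smul_eq_mul] at hFy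
    rw [mul_pow] at hpow
    linarith
  have hbound := decay_of_adaptive_recurrence hp
    (A := L / (Nat.factorial p : ℝ) * D ^ (p + 1)) (by positivity) hδ1 hc0 hc1
    (f := fun k => F (x k) - F xstar) (fun k => sub_nonneg.2 (hmin _ (hxdom k)))
    (by simpa using hrec 0 1 zero_le_one le_rfl)
    (fun k a ha0 ha1 => by
      have h1 := hrec (k + 1) a ha0 ha1
      have h2 := hδ (k + 2) (by omega)
      simp only [Nat.add_sub_cancel, show k + 2 - 1 = k + 1 from rfl] at h2
      rw [show k + 1 + 1 = k + 2 from rfl, h2] at h1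
      linarith) hk
  refine hbound.trans_eq ?_
  congr 1
  simp only [div_eq_mul_inv, mul_inv]
  ring
end

section
/- (Theorem 3.6, convergence of the Inexact Tensor Method with Averaging.) Let p ≥ 1 be an integer, L_p > 0, c ≥ 0, and let F : E → ℝ ∪ {+∞} be convex with minimizer x* and minimal value F*. Let x_0 ∈ dom F, and define for k ≥ 0: λ_k = (k/(k+1))^{p+1} and y_k = λ_k x_k + (1 − λ_k) x_0. Assume the sequence (x_k)_{k≥0} satisfies, for every k ≥ 0 and every y ∈ dom F: F(x_{k+1}) ≤ F(y) + (L_p/p!)‖y − y_k‖^{p+1} + δ_{k+1}, where δ_k = c/k^{p+1}. Then for every k ≥ 1: F(x_k) − F* ≤ (p+1)^{p+1} L_p ‖x_0 − x*‖^{p+1}/(p!·k^p) + c/k^p. -/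
/-- Bernoulli's inequality in the form `(t + 1) * (1 - (t / (t + 1)) ^ n) ≤ n`. -/
theorem add_one_mul_one_sub_div_pow_le (n : ℕ) {t : ℝ} (ht : 0 ≤ t) :
    (t + 1) * (1 - (t / (t + 1)) ^ n) ≤ n := by
  have ht1 : 0 < t + 1 := by linarith
  have hdiv : t / (t + 1) = 1 + -(1 / (t + 1)) := by field_simp; ring
  have hle : 1 / (t + 1) ≤ 1 := by rw [div_le_one ht1]; linarith
  have hB := one_add_mul_le_pow (a := -(1 / (t + 1))) (by linarith) n
  rw [← hdiv] at hB
  calc (t + 1) * (1 - (t / (t + 1)) ^ n) ≤ (t + 1) * (n * (1 / (t + 1))) := by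
        gcongr; linarith
    _ = n := by field_simp

/-- One step from the averaged point `a • u + (1 - a) • x₀` contracts the optimality gap by the
factor `a`, up to an error governed by `1 - a`. -/
theorem ConvexOn.gap_le_of_averaged_step {E : Type*} [NormedAddCommGroup E] [NormedSpace ℝ E]
    {s : Set E} {F : E → ℝ} (hF : ConvexOn ℝ s F) {u v w x₀ : E} (hu : u ∈ s) (hv : v ∈ s)
    {a M ε : ℝ} (ha₀ : 0 ≤ a) (ha₁ : a ≤ 1) {n : ℕ}
    (hstep : ∀ z ∈ s, F w ≤ F z + M * ‖z - (a • u + (1 - a) • x₀)‖ ^ n + ε) :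
    F w - F v ≤ a * (F u - F v) + M * ((1 - a) * ‖x₀ - v‖) ^ n + ε := by
  have hb : 0 ≤ 1 - a := by linarith
  have hw := hstep _ (hF.1 hu hv ha₀ hb (by ring))
  have hz := hF.2 hu hv ha₀ hb (by ring)
  have hdiff : a • u + (1 - a) • v - (a • u + (1 - a) • x₀) = (1 - a) • (v - x₀) := by module
  rw [hdiff, norm_smul, Real.norm_of_nonneg hb, norm_sub_rev] at hw
  simp only [smul_eq_mul] at hz
  linarith

/-- Theorem 3.6: convergence of the Inexact Tensor Method with Averaging, where each
inexact tensor step with accuracy `δ_{k+1} = c/(k+1)^{p+1}` is taken from the averaged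
point `y_k = λ_k x_k + (1 - λ_k) x_0`, `λ_k = (k/(k+1))^{p+1}`.  The extended-valued
convex objective `F` is modeled by a real-valued function on its domain `domF`. -/
theorem inexact_tensor_method_with_averaging_convergence
    {E : Type*} [NormedAddCommGroup E] [InnerProductSpace ℝ E] [FiniteDimensional ℝ E]
    (p : ℕ) (hp : 1 ≤ p) (L c : ℝ) (hL : 0 < L) (hc : 0 ≤ c)
    (domF : Set E) (F : E → ℝ) (hconv : ConvexOn ℝ domF F)
    (xstar : E) (hxstar : xstar ∈ domF) (hmin : ∀ z ∈ domF, F xstar ≤ F z)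
    (x : ℕ → E) (hxdom : ∀ k, x k ∈ domF)
    (lam : ℕ → ℝ) (hlam : ∀ k : ℕ, lam k = ((k : ℝ) / ((k : ℝ) + 1)) ^ (p + 1))
    (y : ℕ → E) (hy : ∀ k : ℕ, y k = lam k • x k + (1 - lam k) • x 0)
    (δ : ℕ → ℝ) (hδ : ∀ k : ℕ, 1 ≤ k → δ k = c / (k : ℝ) ^ (p + 1))
    (hstep : ∀ k : ℕ, ∀ z ∈ domF,
      F (x (k + 1)) ≤ F z + L / (Nat.factorial p : ℝ) * ‖z - y k‖ ^ (p + 1) + δ (k + 1)) :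
    ∀ k : ℕ, 1 ≤ k →
      F (x k) - F xstar ≤
        ((p : ℝ) + 1) ^ (p + 1) * L * ‖x 0 - xstar‖ ^ (p + 1)
            / ((Nat.factorial p : ℝ) * (k : ℝ) ^ p)
          + c / (k : ℝ) ^ p := by
  have hM : 0 ≤ L / (Nat.factorial p : ℝ) := by positivity
  have hweighted : ∀ k : ℕ, (k : ℝ) ^ (p + 1) * (F (x k) - F xstar) ≤
      k * (L / (Nat.factorial p : ℝ) * (((p : ℝ) + 1) * ‖x 0 - xstar‖) ^ (p + 1) + c) := by
    intro k
    induction k with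
    | zero => simp
    | succ k ih =>
      have hk : (0 : ℝ) < (k : ℝ) + 1 := by positivity
      have hlam₀ : 0 ≤ lam k := by rw [hlam]; positivity
      have hlam₁ : lam k ≤ 1 := by
        rw [hlam]
        exact pow_le_one₀ (by positivity) ((div_le_one hk).2 (by linarith))
      have hgap := hconv.gap_le_of_averaged_step (hxdom k) hxstar hlam₀ hlam₁
        (by simpa only [hy] using hstep k)
      rw [hδ (k + 1) (by omega)] at hgap
      have hbern : ((k : ℝ) + 1) * (1 - lam k) ≤ (p : ℝ) + 1 := by
        rw [hlam]
        exact_mod_cast add_one_mul_one_sub_div_pow_le (p + 1) (Nat.cast_nonneg (α := ℝ) k)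
      have hlamk : ((k : ℝ) + 1) ^ (p + 1) * lam k = (k : ℝ) ^ (p + 1) := by
        rw [hlam, div_pow]
        field_simp
      have hpow : (((k : ℝ) + 1) * (1 - lam k) * ‖x 0 - xstar‖) ^ (p + 1) ≤
          (((p : ℝ) + 1) * ‖x 0 - xstar‖) ^ (p + 1) := by
        have : 0 ≤ 1 - lam k := by linarith
        gcongr
      push_cast at hgap ⊢
      calc ((k : ℝ) + 1) ^ (p + 1) * (F (x (k + 1)) - F xstar)
          ≤ ((k : ℝ) + 1) ^ (p + 1) * (lam k * (F (x k) - F xstar)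
            + L / (Nat.factorial p : ℝ) * ((1 - lam k) * ‖x 0 - xstar‖) ^ (p + 1)
            + c / ((k : ℝ) + 1) ^ (p + 1)) := by gcongr
        _ = (((k : ℝ) + 1) ^ (p + 1) * lam k) * (F (x k) - F xstar)
            + L / (Nat.factorial p : ℝ)
              * (((k : ℝ) + 1) * (1 - lam k) * ‖x 0 - xstar‖) ^ (p + 1) + c := by
          rw [mul_assoc ((k : ℝ) + 1), mul_pow ((k : ℝ) + 1), mul_add, mul_add,
            mul_div_cancel₀ c (by positivity)]
          ring
        _ ≤ _ := by
          rw [hlamk]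
          have := mul_le_mul_of_nonneg_left hpow hM
          linarith
  intro k hk
  have hk₀ : (0 : ℝ) < k := by exact_mod_cast hk
  have hw := hweighted k
  rw [pow_succ', mul_assoc, mul_le_mul_iff_right₀ hk₀, mul_comm, ← le_div_iff₀ (by positivity)] at hw
  refine hw.trans_eq ?_
  rw [mul_pow]
  field_simp
end

section
/- Let E be a finite-dimensional real inner product space, x_0 ∈ E, p ≥ 1 an integer, and d(x) = ‖x − x_0‖^{p+1}/(p+1). Then for every x ≠ x_0 and every h ∈ E, the second derivative of d satisfies D²d(x)[h,h] ≤ p·‖x − x_0‖^{p−1}·‖h‖². -/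
section NormPowDerivatives

variable {E : Type*} [NormedAddCommGroup E] [InnerProductSpace ℝ E]

lemma hasFDerivAt_norm_sub_of_ne {x x₀ : E} (hx : x ≠ x₀) :
    HasFDerivAt (fun y : E => ‖y - x₀‖) (‖x - x₀‖⁻¹ • innerSL ℝ (x - x₀)) x := by
  have hpos : 0 < ‖x - x₀‖ := norm_sub_pos_iff.mpr hx
  have hsqrt := (((hasFDerivAt_id x).sub_const x₀).norm_sq).sqrt (pow_pos hpos 2).ne'
  simp only [id, Real.sqrt_sq (norm_nonneg _)] at hsqrt
  refine hsqrt.congr_fderiv ?_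
  ext h
  simp
  field_simp

lemma hasFDerivAt_norm_sub_pow_of_ne {x x₀ : E} (hx : x ≠ x₀) (n : ℕ) :
    HasFDerivAt (fun y : E => ‖y - x₀‖ ^ n)
      ((n * ‖x - x₀‖ ^ (n - 1) * ‖x - x₀‖⁻¹) • innerSL ℝ (x - x₀)) x := by
  refine ((hasFDerivAt_norm_sub_of_ne hx).pow n).congr_fderiv ?_
  ext h
  simp [mul_assoc]

lemma hasFDerivAt_norm_sub_pow_div_of_ne {x x₀ : E} (hx : x ≠ x₀) (q : ℕ) :
    HasFDerivAt (fun y : E => ‖y - x₀‖ ^ (q + 2) / ((q : ℝ) + 2))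
      (‖x - x₀‖ ^ q • innerSL ℝ (x - x₀)) x := by
  have hpos : 0 < ‖x - x₀‖ := norm_sub_pos_iff.mpr hx
  have hq : (q : ℝ) + 2 ≠ 0 := by positivity
  have hpow := (hasFDerivAt_norm_sub_pow_of_ne hx (q + 2)).mul_const ((q : ℝ) + 2)⁻¹
  simp only [← div_eq_mul_inv] at hpow
  refine hpow.congr_fderiv ?_
  ext h
  simp
  field_simp
  ring

lemma fderiv_fderiv_norm_sub_pow_div_apply {x x₀ : E} (hx : x ≠ x₀) (q : ℕ) (h : E) :
    fderiv ℝ (fderiv ℝ (fun y : E => ‖y - x₀‖ ^ (q + 2) / ((q : ℝ) + 2))) x h h =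
      ‖x - x₀‖ ^ q * ‖h‖ ^ 2 +
        q * ‖x - x₀‖ ^ (q - 1) * ‖x - x₀‖⁻¹ * inner ℝ (x - x₀) h ^ 2 := by
  have hgrad : fderiv ℝ (fun y : E => ‖y - x₀‖ ^ (q + 2) / ((q : ℝ) + 2)) =ᶠ[nhds x]
      fun y => ‖y - x₀‖ ^ q • innerSL ℝ (y - x₀) := by
    filter_upwards [isOpen_ne.mem_nhds hx] with y hy
    exact (hasFDerivAt_norm_sub_pow_div_of_ne hy q).fderiv
  have hinner : HasFDerivAt (fun y : E => innerSL ℝ (y - x₀)) (innerSL ℝ) x :=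
    (innerSL ℝ (E := E)).hasFDerivAt.comp x ((hasFDerivAt_id x).sub_const x₀)
  rw [hgrad.fderiv_eq, ((hasFDerivAt_norm_sub_pow_of_ne hx q).fun_smul hinner).fderiv]
  change ‖x - x₀‖ ^ q * inner ℝ h h +
    (q * ‖x - x₀‖ ^ (q - 1) * ‖x - x₀‖⁻¹ * inner ℝ (x - x₀) h) * inner ℝ (x - x₀) h = _
  rw [real_inner_self_eq_norm_sq]
  ring

end NormPowDerivatives


/-- For `d(x) = ‖x - x₀‖^{p+1}/(p+1)`, the second derivative satisfies
`D²d(x)[h,h] ≤ p ‖x - x₀‖^{p-1} ‖h‖²` for every `x ≠ x₀` and every direction `h`. -/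
theorem second_derivative_of_power_of_norm_bound
    {E : Type*} [NormedAddCommGroup E] [InnerProductSpace ℝ E] [FiniteDimensional ℝ E]
    (x₀ : E) (p : ℕ) (hp : 1 ≤ p)
    (d : E → ℝ) (hd : ∀ x, d x = ‖x - x₀‖ ^ (p + 1) / ((p : ℝ) + 1)) :
    ∀ x : E, x ≠ x₀ → ∀ h : E,
      iteratedFDeriv ℝ 2 d x (fun _ => h) ≤ (p : ℝ) * ‖x - x₀‖ ^ (p - 1) * ‖h‖ ^ 2 := by
  intro x hx h
  obtain ⟨q, rfl⟩ : ∃ q, p = q + 1 := ⟨p - 1, by omega⟩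
  obtain rfl : d = fun y => ‖y - x₀‖ ^ (q + 2) / ((q : ℝ) + 2) := by
    funext y
    rw [hd]
    push_cast
    ring
  have hpos : 0 < ‖x - x₀‖ := norm_sub_pos_iff.mpr hx
  have hcs : inner ℝ (x - x₀) h ^ 2 ≤ ‖x - x₀‖ ^ 2 * ‖h‖ ^ 2 := by
    rw [← mul_pow, ← sq_abs]
    gcongr
    exact abs_real_inner_le_norm _ _
  have hpow : q * ‖x - x₀‖ ^ (q - 1) * ‖x - x₀‖⁻¹ * ‖x - x₀‖ ^ 2 = q * ‖x - x₀‖ ^ q := by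
    cases q with
    | zero => simp
    | succ k =>
      rw [Nat.add_sub_cancel]
      field_simp
      ring
  rw [iteratedFDeriv_two_apply, fderiv_fderiv_norm_sub_pow_div_apply hx]
  calc
    _ ≤ ‖x - x₀‖ ^ q * ‖h‖ ^ 2 +
        q * ‖x - x₀‖ ^ (q - 1) * ‖x - x₀‖⁻¹ * (‖x - x₀‖ ^ 2 * ‖h‖ ^ 2) := by gcongr
    _ = _ := by
      rw [← mul_assoc, hpow, Nat.add_sub_cancel]
      push_cast
      ring
end

section
/- Let E be a finite-dimensional real inner product space, x_0 ∈ E, p ≥ 1 an integer, and d(x) = ‖x − x_0‖^{p+1}/(p+1). Then for all v, z ∈ E and any ξ ≥ ‖v − z‖: ‖∇d(v) − ∇d(z)‖ ≤ p·2^{p−2}·‖z − x_0‖^{p−1}·ξ + 2^{p−2}·ξ^p. -/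
lemma norm_pow_norm_smul_sub_le {E : Type*} [SeminormedAddCommGroup E] [NormedSpace ℝ E]
    (a b : E) {ξ : ℝ} (h : ‖a - b‖ ≤ ξ) (n : ℕ) :
    ‖(‖a‖ ^ n) • a - (‖b‖ ^ n) • b‖ ≤ (‖b‖ + ξ) ^ (n + 1) - ‖b‖ ^ (n + 1) := by
  induction n with
  | zero => simpa using h
  | succ n ih =>
    have hab : |‖a‖ - ‖b‖| ≤ ξ := (abs_norm_sub_norm_le a b).trans h
    have ha : ‖a‖ ≤ ‖b‖ + ξ := by linarith [le_abs_self (‖a‖ - ‖b‖)]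
    have split : (‖a‖ ^ (n + 1)) • a - (‖b‖ ^ (n + 1)) • b =
        ‖a‖ • ((‖a‖ ^ n) • a - (‖b‖ ^ n) • b) + ((‖a‖ - ‖b‖) * ‖b‖ ^ n) • b := by
      module
    calc ‖(‖a‖ ^ (n + 1)) • a - (‖b‖ ^ (n + 1)) • b‖
        ≤ ‖a‖ * ‖(‖a‖ ^ n) • a - (‖b‖ ^ n) • b‖ + |‖a‖ - ‖b‖| * ‖b‖ ^ n * ‖b‖ := by
          rw [split]
          refine (norm_add_le _ _).trans_eq ?_
          simp [norm_smul]
      _ ≤ (‖b‖ + ξ) * ((‖b‖ + ξ) ^ (n + 1) - ‖b‖ ^ (n + 1)) + ξ * ‖b‖ ^ n * ‖b‖ := by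
          gcongr
          exact (norm_nonneg a).trans ha
      _ = (‖b‖ + ξ) ^ (n + 1 + 1) - ‖b‖ ^ (n + 1 + 1) := by ring

lemma add_pow_sub_pow_le {s ξ : ℝ} (hs : 0 ≤ s) (hξ : 0 ≤ ξ) (n : ℕ) :
    (s + ξ) ^ (n + 2) - s ^ (n + 2) ≤
      2 ^ n * ((n + 2) * s ^ (n + 1) * ξ + ξ ^ (n + 2)) := by
  let gap : ℝ → ℝ := fun t =>
    2 ^ n * ((n + 2) * s ^ (n + 1) * t + t ^ (n + 2)) - (s + t) ^ (n + 2)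
  have hderiv (t : ℝ) : HasDerivAt gap
      ((n + 2) * (2 ^ n * (s ^ (n + 1) + t ^ (n + 1)) - (s + t) ^ (n + 1))) t := by
    have h := ((((hasDerivAt_id t).const_mul ((n + 2) * s ^ (n + 1))).add
      (hasDerivAt_pow (n + 2) t)).const_mul (2 ^ n)).sub
      (((hasDerivAt_id t).const_add s).pow (n + 2))
    refine h.congr_deriv ?_
    simp only [id, Nat.add_succ_sub_one]
    push_cast
    ring
  have hmono : MonotoneOn gap (Set.Ici 0) := by
    refine monotoneOn_of_deriv_nonneg (convex_Ici 0)
      (fun t _ => (hderiv t).continuousAt.continuousWithinAt)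
      (fun t _ => (hderiv t).differentiableAt.differentiableWithinAt) fun t ht => ?_
    rw [interior_Ici] at ht
    rw [(hderiv t).deriv]
    have := add_pow_le hs (le_of_lt ht) (n + 1)
    rw [Nat.add_sub_cancel] at this
    exact mul_nonneg (by positivity) (sub_nonneg.2 this)
  have h := hmono Set.self_mem_Ici hξ hξ
  simp [gap] at h
  linarith

/-- For `d(x) = ‖x - x₀‖^{p+1}/(p+1)` with gradient `∇d(x) = ‖x - x₀‖^{p-1}(x - x₀)`:
for all `v, z` and any `ξ ≥ ‖v - z‖`,
`‖∇d(v) - ∇d(z)‖ ≤ p 2^{p-2} ‖z - x₀‖^{p-1} ξ + 2^{p-2} ξ^p`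
(`2^{p-2}` is a real power). -/
theorem gradient_of_power_of_norm_lipschitz_type_bound
    {E : Type*} [NormedAddCommGroup E] [InnerProductSpace ℝ E] [FiniteDimensional ℝ E]
    (x₀ : E) (p : ℕ) (hp : 1 ≤ p) :
    ∀ v z : E, ∀ ξ : ℝ, ‖v - z‖ ≤ ξ →
      ‖(‖v - x₀‖ ^ (p - 1)) • (v - x₀) - (‖z - x₀‖ ^ (p - 1)) • (z - x₀)‖ ≤
        (p : ℝ) * (2 : ℝ) ^ ((p : ℝ) - 2) * ‖z - x₀‖ ^ (p - 1) * ξ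
          + (2 : ℝ) ^ ((p : ℝ) - 2) * ξ ^ p := by
  intro v z ξ h
  have hξ : 0 ≤ ξ := (norm_nonneg _).trans h
  obtain rfl | ⟨n, rfl⟩ : p = 1 ∨ ∃ n, p = n + 2 := by
    obtain rfl | hp := hp.eq_or_lt
    · exact .inl rfl
    · exact .inr ⟨p - 2, by omega⟩
  · have hpow : (2 : ℝ) ^ (((1 : ℕ) : ℝ) - 2) = 1 / 2 := by
      rw [show ((1 : ℕ) : ℝ) - 2 = -1 by norm_num, Real.rpow_neg_one]
      norm_num
    rw [hpow]
    simp only [Nat.sub_self, pow_zero, one_smul, sub_sub_sub_cancel_right, Nat.cast_one, pow_one]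
    linarith
  · have hpow : (2 : ℝ) ^ (((n + 2 : ℕ) : ℝ) - 2) = 2 ^ n := by
      rw [show ((n + 2 : ℕ) : ℝ) - 2 = n by push_cast; ring, Real.rpow_natCast]
    have hnorm := norm_pow_norm_smul_sub_le (v - x₀) (z - x₀) (ξ := ξ) (by simpa using h) (n + 1)
    have hreal := add_pow_sub_pow_le (norm_nonneg (z - x₀)) hξ n
    rw [hpow]
    refine (hnorm.trans hreal).trans_eq ?_
    rw [show n + 2 - 1 = n + 1 from rfl]
    push_cast
    ring
end

section
/- For an integer n ≥ 1 and integer p ≥ 1, define f : ℝ^n → ℝ by f(x) = |x^{(1)}|^{p+1} + Σ_{i=2}^n |x^{(i)} − 2x^{(i−1)}|^{p+1}, where x^{(i)} denotes the i-th coordinate of x. Then f attains its minimum 0 at the origin x* = 0; the points x_0 = (1, 1, ..., 1) and x_1 with x_1^{(i)} = 2^i − 1 satisfy f(x_0) = f(x_1) = n; and in the standard Euclidean norm, ‖x_0 − x*‖ = √n while ‖x_1 − x*‖ ≥ 2^{n−1}. Consequently, the radius D = sup{‖x − x*‖ : f(x) ≤ f(x_0)} of the initial level set satisfies D ≥ 2^{n−1}.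 -/
/-- Example 3.1: for `f(x) = |x^{(1)}|^{p+1} + Σ_{i=2}^n |x^{(i)} - 2x^{(i-1)}|^{p+1}` on
`ℝⁿ` (0-indexed coordinates), `f` attains its minimum `0` at the origin; the points
`x₀ = (1,…,1)` and `x₁` with `x₁^{(i)} = 2^i - 1` satisfy `f(x₀) = f(x₁) = n`,
`‖x₀‖ = √n`, `‖x₁‖ ≥ 2^{n-1}`; hence the radius `D` of the initial level set
`{x : f(x) ≤ f(x₀)}` satisfies `D ≥ 2^{n-1}`. -/
theorem level_set_radius_can_be_exponentially_large (n : ℕ) (hn : 1 ≤ n)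
    (p : ℕ) (hp : 1 ≤ p)
    (f : EuclideanSpace ℝ (Fin n) → ℝ)
    (hf : ∀ x : EuclideanSpace ℝ (Fin n),
      f x = ∑ i : Fin n,
        if (i : ℕ) = 0 then |x i| ^ (p + 1)
        else |x i - 2 * x ⟨(i : ℕ) - 1, Nat.lt_of_le_of_lt (Nat.sub_le _ 1) i.isLt⟩| ^ (p + 1)) :
    (f 0 = 0 ∧ ∀ x, f 0 ≤ f x) ∧
    ∀ x₀ x₁ : EuclideanSpace ℝ (Fin n),
      (∀ i : Fin n, x₀ i = 1) → (∀ i : Fin n, x₁ i = 2 ^ ((i : ℕ) + 1) - 1) →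
      f x₀ = n ∧ f x₁ = n ∧
      ‖x₀ - 0‖ = Real.sqrt n ∧ (2 : ℝ) ^ (n - 1) ≤ ‖x₁ - 0‖ ∧
      ∀ D : ℝ, (∀ z : EuclideanSpace ℝ (Fin n), f z ≤ f x₀ → ‖z - 0‖ ≤ D) →
        (2 : ℝ) ^ (n - 1) ≤ D := by
  have f_zero : f 0 = 0 := by
    rw [hf]
    exact Finset.sum_eq_zero fun i _ => by simp
  refine ⟨⟨f_zero, fun x => ?_⟩, fun x₀ x₁ h₀ h₁ => ?_⟩
  · rw [f_zero, hf]
    exact Finset.sum_nonneg fun i _ => by split_ifs <;> positivity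
  have f_x₀ : f x₀ = n := by
    rw [hf, Finset.sum_congr rfl (g := fun _ => (1 : ℝ)) fun i _ => ?_]
    · simp
    · rw [h₀, h₀]
      norm_num
  have f_x₁ : f x₁ = n := by
    rw [hf, Finset.sum_congr rfl (g := fun _ => (1 : ℝ)) fun i _ => ?_]
    · simp
    · rw [h₁, h₁]
      split_ifs with hi
      · norm_num [hi]
      · have step : (2 : ℝ) ^ ((i : ℕ) + 1) - 1 - 2 * (2 ^ ((i : ℕ) - 1 + 1) - 1) = 1 := by
          rw [Nat.sub_add_cancel (Nat.one_le_iff_ne_zero.mpr hi), pow_succ]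
          ring
        simp only [step, abs_one, one_pow]
  have norm_x₁ : (2 : ℝ) ^ (n - 1) ≤ ‖x₁ - 0‖ := by
    have last_le := PiLp.norm_apply_le x₁ ⟨n - 1, by omega⟩
    rw [h₁, Real.norm_eq_abs] at last_le
    have one_le : (1 : ℝ) ≤ 2 ^ (n - 1) := one_le_pow₀ one_le_two
    rw [sub_zero]
    refine le_trans ?_ ((le_abs_self _).trans last_le)
    rw [pow_succ]
    linarith
  refine ⟨f_x₀, f_x₁, ?_, norm_x₁, fun D hD => norm_x₁.trans (hD x₁ (f_x₁.trans f_x₀.symm).le)⟩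
  simp [EuclideanSpace.norm_eq, h₀]
end
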